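/- Let M ∈ ℝ^{p×p} be positive-definite and let β > 0 be the smallest eigenvalue of its symmetric part M_s = (M + Mᵀ)/2. Let α > 0 and let (σ_k)_{k∈ℕ}, (u_k)_{k∈ℕ} be sequences in ℝ^p with σ_{k+1} = σ_k + Mu_k and u_k ∈ −α·Sgn(σ_{k+1}) for all k. Then the origin is reached in finite time: for k₀ = ⌈‖σ₀‖₁/(αβ)⌉ one has σ_k = 0 for all k > k₀. -/

import Mathlib

/-!
The proof uses `V k = ‖σ k‖₁` as a Lyapunov function. Since `u k ∈ -α Sgn (σ (k+1))`, one has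
`σ (k+1) ⬝ᵥ u k = -α V (k+1)`, while `|u k i| ≤ α` gives `σ k ⬝ᵥ u k ≥ -α V k`. Pairing the
dynamics with `u k` and bounding `uᵀMu ≥ β‖u‖²` (`smallest_eigenvalue_mul_le`) yields
`α V (k+1) + β ‖u k‖² ≤ α V k`. As long as `σ (k+1) ≠ 0`, some component of `u k` has absolute
value `α`, so `V` drops by at least `αβ` at that step; and `V` never increases, so once it
vanishes it stays zero. Hence `V k ≤ max 0 (V 0 - k αβ)`, which is zero for `k ≥ V 0 / (αβ)`.
-/

open Matrix

/-- The set-valued sign function: `Sgn x = {1}` if `x > 0`, `{-1}` if `x < 0`,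
and `[-1, 1]` if `x = 0`. -/
noncomputable def Sgn (x : ℝ) : Set ℝ :=
  if 0 < x then {1} else if x < 0 then {-1} else Set.Icc (-1) 1

/-- Rayleigh bound: a lower bound for the eigenvalues of the symmetric part of `M` is a lower
bound for the quadratic form of `M` on unit vectors. -/
theorem smallest_eigenvalue_mul_le {p : ℕ} (M : Matrix (Fin p) (Fin p) ℝ)
    (hMs : ((1 / 2 : ℝ) • (M + Mᵀ)).IsHermitian)
    (β : ℝ) (hβ : β ∈ lowerBounds (Set.range hMs.eigenvalues)) (x : Fin p → ℝ) :
    β * (x ⬝ᵥ x) ≤ x ⬝ᵥ (M *ᵥ x) := by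
  have hpsd : ((1 / 2 : ℝ) • (M + Mᵀ) - algebraMap ℝ _ β).PosSemidef := by
    rw [posSemidef_iff_isHermitian_and_spectrum_nonneg]
    refine ⟨hMs.sub ?_, ?_⟩
    · rw [Matrix.algebraMap_eq_diagonal]
      exact isHermitian_diagonal _
    · rw [← spectrum.sub_singleton_eq, hMs.spectrum_real_eq_range_eigenvalues]
      rintro _ ⟨a, ha, b, rfl, rfl⟩
      exact sub_nonneg.2 (hβ ha)
  have h := hpsd.dotProduct_mulVec_nonneg x
  have ht : x ⬝ᵥ (Mᵀ *ᵥ x) = x ⬝ᵥ (M *ᵥ x) := by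
    rw [mulVec_transpose, dotProduct_comm, ← dotProduct_mulVec]
  rw [star_trivial, Algebra.algebraMap_eq_smul_one, sub_mulVec, smul_mulVec, smul_mulVec,
    one_mulVec, add_mulVec, dotProduct_sub, dotProduct_smul, dotProduct_smul, dotProduct_add,
    ht, smul_eq_mul, smul_eq_mul] at h
  linarith

theorem abs_le_one_of_mem_Sgn {x v : ℝ} (h : v ∈ Sgn x) : |v| ≤ 1 := by
  unfold Sgn at h
  split_ifs at h
  · simp_all
  · simp_all
  · exact abs_le.2 h

theorem mul_eq_abs_of_mem_Sgn {x v : ℝ} (h : v ∈ Sgn x) : x * v = |x| := by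
  unfold Sgn at h
  split_ifs at h with h1 h2
  · rw [Set.mem_singleton_iff.1 h, abs_of_pos h1, mul_one]
  · rw [Set.mem_singleton_iff.1 h, abs_of_neg h2, mul_neg_one]
  · have : x = 0 := by linarith
    simp [this]

theorem sq_eq_one_of_mem_Sgn {x v : ℝ} (hx : x ≠ 0) (h : v ∈ Sgn x) : v ^ 2 = 1 := by
  have h1 := mul_eq_abs_of_mem_Sgn h
  have h2 : x ^ 2 * v ^ 2 = x ^ 2 * 1 := by rw [← mul_pow, h1, sq_abs, mul_one]
  exact mul_left_cancel₀ (pow_ne_zero 2 hx) h2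

/-- One step of the scheme decreases the 1-norm of the state by at least `(β/α) ‖u‖²`. -/
theorem lyapunov_step {p : ℕ} {M : Matrix (Fin p) (Fin p) ℝ} {α β : ℝ} (hα : 0 < α)
    {s s' w : Fin p → ℝ} (hM : β * (w ⬝ᵥ w) ≤ w ⬝ᵥ (M *ᵥ w)) (hs : s' = s + M *ᵥ w)
    (hw : ∀ i, ∃ v ∈ Sgn (s' i), w i = -α * v) :
    α * (∑ i, |s' i|) + β * (w ⬝ᵥ w) ≤ α * ∑ i, |s i| := by
  have h1 : w ⬝ᵥ s' = -(α * ∑ i, |s' i|) := by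
    rw [dotProduct, Finset.mul_sum, ← Finset.sum_neg_distrib]
    refine Finset.sum_congr rfl fun i _ => ?_
    obtain ⟨v, hv, h⟩ := hw i
    rw [h, ← mul_eq_abs_of_mem_Sgn hv]
    ring
  have h2 : -(α * ∑ i, |s i|) ≤ w ⬝ᵥ s := by
    rw [dotProduct, Finset.mul_sum, ← Finset.sum_neg_distrib]
    refine Finset.sum_le_sum fun i _ => ?_
    obtain ⟨v, hv, h⟩ := hw i
    have hwi : |w i| ≤ α := by
      rw [h, abs_mul, abs_neg, abs_of_pos hα]
      exact mul_le_of_le_one_right hα.le (abs_le_one_of_mem_Sgn hv)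
    refine (abs_le.1 ?_).1
    rw [abs_mul]
    exact mul_le_mul_of_nonneg_right hwi (abs_nonneg _)
  have h3 : w ⬝ᵥ s' = w ⬝ᵥ s + w ⬝ᵥ (M *ᵥ w) := by rw [hs, dotProduct_add]
  linarith

theorem sq_le_dotProduct_of_ne_zero {p : ℕ} {α : ℝ} {s' w : Fin p → ℝ}
    (hw : ∀ i, ∃ v ∈ Sgn (s' i), w i = -α * v) (hs' : s' ≠ 0) : α ^ 2 ≤ w ⬝ᵥ w := by
  obtain ⟨i, hi⟩ := Function.ne_iff.1 hs'
  obtain ⟨v, hv, h⟩ := hw i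
  have h1 : w i * w i = α ^ 2 := by
    have := sq_eq_one_of_mem_Sgn hi hv
    rw [h]
    linear_combination α ^ 2 * this
  rw [← h1]
  exact Finset.single_le_sum (f := fun j => w j * w j) (fun j _ => mul_self_nonneg _)
    (Finset.mem_univ i)

/-- let `M` be positive-definite with `β > 0` the smallest eigenvalue of its
symmetric part `M_s = (M + Mᵀ)/2`.  For the implicitly discretized sliding dynamics
`σ_{k+1} = σ_k + M u_k`, `u_k ∈ -α·Sgn(σ_{k+1})`, the origin is reached in finite time:
with `k₀ = ⌈‖σ₀‖₁ / (αβ)⌉` one has `σ_k = 0` for all `k > k₀`. -/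
theorem finite_time_convergence (p : ℕ) (M : Matrix (Fin p) (Fin p) ℝ)
    (hMpos : ∀ x : Fin p → ℝ, x ≠ 0 → 0 < x ⬝ᵥ (M *ᵥ x))
    (hMs : ((1 / 2 : ℝ) • (M + Mᵀ)).IsHermitian)
    (β : ℝ) (hβ : IsLeast (Set.range hMs.eigenvalues) β) (hβpos : 0 < β)
    (α : ℝ) (hα : 0 < α) (σ u : ℕ → Fin p → ℝ)
    (hdyn : ∀ k, σ (k + 1) = σ k + M *ᵥ u k)
    (hu : ∀ k i, ∃ v ∈ Sgn (σ (k + 1) i), u k i = -α * v) :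
    ∀ k : ℕ, ⌈(∑ i, |σ 0 i|) / (α * β)⌉₊ < k → σ k = 0 := by
  have key : ∀ k, σ k ≠ 0 → ∑ i, |σ k i| ≤ (∑ i, |σ 0 i|) - k * (α * β) := by
    intro k
    induction k with
    | zero => simp
    | succ k ih =>
      intro hne
      have hstep := lyapunov_step hα (smallest_eigenvalue_mul_le M hMs β hβ.2 (u k)) (hdyn k) (hu k)
      have hsq := mul_le_mul_of_nonneg_left (sq_le_dotProduct_of_ne_zero (hu k) hne) hβpos.le
      have hdec : ∑ i, |σ (k + 1) i| ≤ (∑ i, |σ k i|) - α * β := by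
        refine le_of_mul_le_mul_left ?_ hα
        linarith
      -- The drop is strict, so a nonzero state can only come from a nonzero state.
      have hk : σ k ≠ 0 := by
        intro h0
        have hnn : 0 ≤ ∑ i, |σ (k + 1) i| := Finset.sum_nonneg fun i _ => abs_nonneg _
        have hz : ∑ i, |σ k i| = 0 := by simp [h0]
        have := mul_pos hα hβpos
        linarith
      have := ih hk
      push_cast
      linarith
  intro k hk
  by_contra hne
  have hnn : 0 ≤ ∑ i, |σ k i| := Finset.sum_nonneg fun i _ => abs_nonneg _
  have hlt := (div_lt_iff₀ (mul_pos hα hβpos)).1 (Nat.lt_of_ceil_lt hk)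
  linarith [key k hne]
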